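/- For every ℓ ≥ 1 there exist a pushdown automaton A with 3 states and 2 stack symbols and ℓ deterministic finite automata A_1, ..., A_ℓ, each with O(ℓ) states, over a common alphabet containing a sub-alphabet Γ₂, such that every word in L(A) ∩ L(A_1) ∩ ⋯ ∩ L(A_ℓ), when projected to Γ₂, is exactly a word in Γ₂ of length 2^{2^ℓ}, and such a word exists. -/

import Mathlib

/-- A stack operation of a pushdown automaton. -/
inductive StackOp (Γ : Type*) where
  | push (γ : Γ)
  | pop (γ : Γ)
  | nop

/-- The effect of a stack operation: `op.apply s s'` means performing `op`
on stack `s` yields stack `s'`. -/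
def StackOp.apply {Γ : Type*} : StackOp Γ → List Γ → List Γ → Prop
  | .push γ, s, s' => s' = γ :: s
  | .pop γ, s, s' => s = γ :: s'
  | .nop, s, s' => s' = s

/-- A pushdown automaton with states `Q`, stack symbols `Γ` and input alphabet `σ`.
Transitions read a letter or `ε` (`Option σ`) and perform one stack operation. -/
structure PDA (Q Γ σ : Type*) where
  trans : Set (Q × Option σ × StackOp Γ × Q)
  start : Q
  final : Set Q

/-- `P.Steps c w c' h` : there is a run of `P` from configuration `c` to `c'`
reading the word `w`, whose maximal stack height (over all configurations
of the run, endpoints included) is `h`. -/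
inductive PDA.Steps {Q Γ σ : Type*} (P : PDA Q Γ σ) :
    Q × List Γ → List σ → Q × List Γ → ℕ → Prop where
  | refl (c : Q × List Γ) : PDA.Steps P c [] c c.2.length
  | step {q q' : Q} {a : Option σ} {op : StackOp Γ} {s s' : List Γ}
      {w : List σ} {c : Q × List Γ} {h : ℕ} :
      (q, a, op, q') ∈ P.trans → op.apply s s' →
      PDA.Steps P (q', s') w c h →
      PDA.Steps P (q, s) (a.toList ++ w) c (max s.length h)

/-- The language of a PDA: acceptance by final state and empty stack,
starting from the initial state with empty stack. -/
def PDA.language {Q Γ σ : Type*} (P : PDA Q Γ σ) : Set (List σ) :=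
  {w | ∃ f ∈ P.final, ∃ h, P.Steps (P.start, []) w (f, []) h}
/-- The alphabet `{0,1} ∪ {inc, dec} ∪ Γ₂`. -/
inductive CtrSym (Γ : Type*) where
  | bit (b : Bool)
  | inc
  | dec
  | letter (g : Γ)
deriving DecidableEq

/-- Value of an `ℓ`-bit string, most significant bit first. -/
def bitsVal (bs : List Bool) : ℤ :=
  bs.foldl (fun acc b => 2 * acc + (if b then 1 else 0)) 0

/-- The operators: `inc` increments, `dec` decrements, letters of `Γ₂` keep
the value unchanged. (`bit` is not an operator.) -/
def CtrSym.isOp {Γ : Type*} : CtrSym Γ → Prop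
  | .bit _ => False
  | _ => True

/-- Application of an operator to a value. -/
def CtrSym.applyOp {Γ : Type*} : CtrSym Γ → ℤ → ℤ
  | .inc, v => v + 1
  | .dec, v => v - 1
  | _, v => v

/-- `ValidSeq ℓ prev l` : the sequence of (operator, ℓ-bit number) pairs `l` is a
valid counting sequence starting from the previous ℓ-bit number `prev`, where each
number is congruent modulo `2^ℓ` to the operator applied to the previous one. -/
def ValidSeq {Γ : Type*} (ℓ : ℕ) : List Bool → List (CtrSym Γ × List Bool) → Prop
  | _, [] => True
  | prev, (o, n) :: rest =>
      o.isOp ∧ n.length = ℓ ∧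
      bitsVal n % (2 ^ ℓ : ℤ) = o.applyOp (bitsVal prev) % (2 ^ ℓ : ℤ) ∧
      ValidSeq ℓ n rest

/-- The language `L_ℓ` of alternating sequences `n₀ o₁ n₁ o₂ n₂ ⋯ o_k n_k` of ℓ-bit
numbers and operators, where each operator applied to the previous number gives
the next number modulo `2^ℓ`. -/
def LCtr (Γ : Type*) (ℓ : ℕ) : Set (List (CtrSym Γ)) :=
  {w | ∃ (n₀ : List Bool) (rest : List (CtrSym Γ × List Bool)),
    n₀.length = ℓ ∧ ValidSeq ℓ n₀ rest ∧
    w = n₀.map CtrSym.bit ++ (rest.map fun p => p.1 :: p.2.map CtrSym.bit).flatten}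

/-- Projection of a word over `Γ₂ ∪ {0,1,inc,dec}` to the sub-alphabet `Γ₂`. -/
def projLetters {Γ : Type*} (w : List (CtrSym Γ)) : List Γ :=
  w.filterMap fun s => match s with
    | .letter g => some g
    | _ => none


namespace DoubleExp

/-- Carry position of the increment `h → h+1`. -/
theorem carry (h : ℕ) : ∃ k, (∀ i < k, h.testBit i = true ∧ (h + 1).testBit i = false) ∧
    (h.testBit k = false ∧ (h + 1).testBit k = true) ∧
    ∀ i, k < i → h.testBit i = (h + 1).testBit i := by
  induction h using Nat.strong_induction_on with
  | _ h ih =>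
    rcases Nat.even_or_odd' h with ⟨m, rfl | rfl⟩
    · refine ⟨0, by simp, ?_, ?_⟩
      · simp [Nat.testBit_zero]
      · intro i hi
        obtain ⟨i, rfl⟩ := Nat.exists_eq_succ_of_ne_zero hi.ne'
        rw [Nat.succ_eq_add_one, Nat.testBit_succ, Nat.testBit_succ]
        congr 1
        omega
    · obtain ⟨k, h1, h2, h3⟩ := ih m (by omega)
      have e1 : (2 * m + 1) / 2 = m := by omega
      have e2 : (2 * m + 1 + 1) / 2 = m + 1 := by omega
      refine ⟨k + 1, ?_, ?_, ?_⟩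
      · intro i hi
        cases i with
        | zero =>
          simp only [Nat.testBit_zero]
          constructor
          · simp
          · simp; omega
        | succ i =>
          rw [Nat.testBit_succ, Nat.testBit_succ, e1, e2]
          exact h1 i (by omega)
      · rw [Nat.testBit_succ, Nat.testBit_succ, e1, e2]
        exact h2
      · intro i hi
        cases i with
        | zero => omega
        | succ i =>
          rw [Nat.testBit_succ, Nat.testBit_succ, e1, e2]
          exact h3 i (by omega)

theorem lt_of_testBit {n k l : ℕ} (h : n.testBit k = true) (hn : n < 2 ^ l) : k < l :=
  (Nat.pow_lt_pow_iff_right (by norm_num : 1 < 2)).1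
    (lt_of_le_of_lt (Nat.ge_two_pow_of_testBit h) hn)

/-- Step function of the `i`-th automaton: first component `0`/`1` is bit `i` of the counter,
`2` is the dead state; the second component counts (in unary) the `bit` letters read since
the last operator, announcing the carry position. -/
def dstep {Γ : Type} {l : ℕ} (i : Fin l) (s : Fin 3 × Fin l) : CtrSym Γ → Fin 3 × Fin l
  | .bit _ => if h : s.2.val + 1 < l then (s.1, ⟨s.2.val + 1, h⟩) else (2, s.2)
  | .inc => if i < s.2 then (if s.1 = 1 then 0 else 2, ⟨0, i.pos⟩)
      else if i = s.2 then (if s.1 = 0 then 1 else 2, ⟨0, i.pos⟩) else (s.1, ⟨0, i.pos⟩)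
  | .dec => if i < s.2 then (if s.1 = 0 then 1 else 2, ⟨0, i.pos⟩)
      else if i = s.2 then (if s.1 = 1 then 0 else 2, ⟨0, i.pos⟩) else (s.1, ⟨0, i.pos⟩)
  | .letter _ => (if s.1 = 1 then 1 else 2, ⟨0, i.pos⟩)

def M (Γ : Type) {l : ℕ} (i : Fin l) : DFA (CtrSym Γ) (Fin 3 × Fin l) where
  step := dstep i
  start := (0, ⟨0, i.pos⟩)
  accept := {s | s.1 ≠ 2}

def enc {l : ℕ} (i : Fin l) (h : ℕ) (j : Fin l) : Fin 3 × Fin l :=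
  (if h.testBit i then 1 else 0, j)

theorem dead_step {Γ : Type} {l : ℕ} (i : Fin l) (s : Fin 3 × Fin l) (a : CtrSym Γ)
    (h : s.1 = 2) : (dstep i s a).1 = 2 := by
  cases a <;> simp only [dstep] <;> split_ifs <;> simp_all

theorem dead_eval {Γ : Type} {l : ℕ} (i : Fin l) (w : List (CtrSym Γ)) :
    ∀ (s : Fin 3 × Fin l), s.1 = 2 → ((M Γ i).evalFrom s w).1 = 2 := by
  induction w with
  | nil => intro s h; simpa using h
  | cons a w ih =>
    intro s h
    rw [DFA.evalFrom_cons]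
    exact ih _ (dead_step i s a h)

theorem bit_ok {Γ : Type} {l : ℕ} (hl : 0 < l) (h : ℕ) (j : Fin l) (b : Bool)
    (hd : ∀ i : Fin l, (dstep (Γ := Γ) i (enc i h j) (.bit b)).1 ≠ 2) :
    ∃ j', ∀ i : Fin l, dstep (Γ := Γ) i (enc i h j) (.bit b) = enc i h j' := by
  by_cases hj : j.val + 1 < l
  · exact ⟨⟨j.val + 1, hj⟩, fun i => by simp [dstep, enc, hj]⟩
  · exact absurd (by simp [dstep, enc, hj]) (hd ⟨0, hl⟩)

theorem letter_ok {Γ : Type} {l : ℕ} (h : ℕ) (hh : h < 2 ^ l) (j : Fin l) (g : Γ)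
    (hd : ∀ i : Fin l, (dstep i (enc i h j) (.letter g)).1 ≠ 2) :
    h + 1 = 2 ^ l ∧ ∀ i : Fin l, dstep i (enc i h j) (.letter g) = enc i h ⟨0, i.pos⟩ := by
  have hb : ∀ i : Fin l, h.testBit i = true := by
    intro i
    by_contra hc
    exact hd i (by simp [dstep, enc, hc])
  constructor
  · by_contra hne
    obtain ⟨k, -, ⟨h1, h2⟩, -⟩ := carry h
    have hk := lt_of_testBit (l := l) h2 (by omega)
    have := hb ⟨k, hk⟩
    simp_all
  · intro i
    simp [dstep, enc, hb i]

theorem inc_ok {Γ : Type} {l : ℕ} (h : ℕ) (hh : h < 2 ^ l) (j : Fin l)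
    (hd : ∀ i : Fin l, (dstep (Γ := Γ) i (enc i h j) .inc).1 ≠ 2) :
    h + 1 < 2 ^ l ∧ ∀ i : Fin l, dstep (Γ := Γ) i (enc i h j) .inc = enc i (h + 1) ⟨0, i.pos⟩ := by
  obtain ⟨k, h1, ⟨h2, h2'⟩, h3⟩ := carry h
  have a1 : ∀ i : Fin l, i < j → h.testBit i = true := by
    intro i hi
    by_contra hc
    exact hd i (by simp [dstep, enc, hc, hi])
  have a2 : h.testBit j = false := by
    by_contra hc
    exact hd j (by simp [dstep, enc, hc])
  have hjk : j.val = k := by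
    rcases lt_trichotomy j.val k with hlt | heq | hgt
    · have := (h1 _ hlt).1
      simp_all
    · exact heq
    · have := a1 ⟨k, by omega⟩ hgt
      simp_all
  constructor
  · by_contra hge
    have : h = 2 ^ l - 1 := by omega
    rw [this, Nat.testBit_two_pow_sub_one] at a2
    simp at a2
  · intro i
    rcases lt_trichotomy i.val k with hlt | heq | hgt
    · have hij : i < j := by rw [Fin.lt_def]; omega
      simp [dstep, enc, hij, h1 _ hlt]
    · have hij : i = j := by ext; omega
      subst hij
      subst heq
      simp [dstep, enc, h2, h2']
    · have hij : ¬ i < j := by rw [Fin.lt_def]; omega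
      have hij' : ¬ i = j := by rintro rfl; omega
      simp [dstep, enc, hij, hij', h3 _ hgt]

theorem dec_ok {Γ : Type} {l : ℕ} (h : ℕ) (j : Fin l)
    (hd : ∀ i : Fin l, (dstep (Γ := Γ) i (enc i (h + 1) j) .dec).1 ≠ 2) :
    ∀ i : Fin l, dstep (Γ := Γ) i (enc i (h + 1) j) .dec = enc i h ⟨0, i.pos⟩ := by
  obtain ⟨k, h1, ⟨h2, h2'⟩, h3⟩ := carry h
  have a1 : ∀ i : Fin l, i < j → (h + 1).testBit i = false := by
    intro i hi
    by_contra hc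
    exact hd i (by simp [dstep, enc, hc, hi])
  have a2 : (h + 1).testBit j = true := by
    by_contra hc
    exact hd j (by simp [dstep, enc, hc])
  have hjk : j.val = k := by
    rcases lt_trichotomy j.val k with hlt | heq | hgt
    · have := (h1 _ hlt).2
      simp_all
    · exact heq
    · have := a1 ⟨k, by omega⟩ hgt
      simp_all
  intro i
  rcases lt_trichotomy i.val k with hlt | heq | hgt
  · have hij : i < j := by rw [Fin.lt_def]; omega
    simp [dstep, enc, hij, h1 _ hlt]
  · have hij : i = j := by ext; omega
    subst hij
    subst heq
    simp [dstep, enc, h2, h2']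
  · have hij : ¬ i < j := by rw [Fin.lt_def]; omega
    have hij' : ¬ i = j := by rintro rfl; omega
    simp [dstep, enc, hij, hij', h3 _ hgt]

/-- Transitions of the PDA: state `0` descends, `1` ascends, `2` lies between two subtrees. -/
inductive Tr (Γ : Type) : Fin 3 → Option (CtrSym Γ) → StackOp (Fin 2) → Fin 3 → Prop
  | bit (q : Fin 3) (b : Bool) : Tr Γ q (some (.bit b)) .nop q
  | down : Tr Γ 0 (some .inc) (.push 0) 0
  | leaf1 (g : Γ) : Tr Γ 0 (some (.letter g)) .nop 2
  | leaf2 (g : Γ) : Tr Γ 2 (some (.letter g)) .nop 1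
  | up0 : Tr Γ 1 (some .dec) (.pop 0) 2
  | up1 : Tr Γ 1 (some .dec) (.pop 1) 1
  | mid : Tr Γ 2 (some .inc) (.push 1) 0

def P (Γ : Type) : PDA (Fin 3) (Fin 2) (CtrSym Γ) where
  trans := {t | Tr Γ t.1 t.2.1 t.2.2.1 t.2.2.2}
  start := 0
  final := {1}

/-- Number of letters still to be produced by the pending stack frames. -/
def R (l : ℕ) : List (Fin 2) → ℕ
  | [] => 0
  | x :: s => (if x = 0 then 2 ^ (2 ^ l - (s.length + 1)) else 0) + R l s

/-- Number of letters still to be produced from a configuration. -/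
def N (l : ℕ) (c : Fin 3 × List (Fin 2)) : ℕ :=
  (if c.1 = 0 then 2 ^ (2 ^ l - c.2.length) else
    if c.1 = 2 then 2 ^ (2 ^ l - (c.2.length + 1)) else 0) + R l c.2

theorem sound {Γ : Type} {l : ℕ} (hl : 0 < l) {c c' : Fin 3 × List (Fin 2)}
    {w : List (CtrSym Γ)} {n : ℕ} (hs : (P Γ).Steps c w c' n) :
    c' = (1, []) → ∀ j : Fin l, c.2.length < 2 ^ l →
    (∀ i : Fin l, ((M Γ i).evalFrom (enc i c.2.length j) w).1 ≠ 2) →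
    (projLetters w).length = N l c := by
  induction hs with
  | refl c =>
    rintro rfl j - -
    simp [projLetters, N, R]
  | @step q q' a op s s' w c h ht ha hs ih =>
    intro hc j hlen hd
    replace hlen : s.length < 2 ^ l := hlen
    have ht' : Tr Γ q a op q' := ht
    have key : ∀ x : CtrSym Γ, a = some x → ∀ i : Fin l,
        ((M Γ i).evalFrom (dstep i (enc i s.length j) x) w).1 ≠ 2 := by
      rintro x rfl i
      exact hd i
    have key2 : ∀ x : CtrSym Γ, a = some x → ∀ i : Fin l,
        (dstep i (enc i s.length j) x).1 ≠ 2 :=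
      fun x hx i hi => key x hx i (dead_eval i w _ hi)
    have pos : 0 < 2 ^ l := by positivity
    cases ht' with
    | bit q b =>
      obtain rfl : s' = s := ha
      obtain ⟨j', hj'⟩ := bit_ok hl _ _ _ (key2 _ rfl)
      have := ih hc j' hlen (fun i => by simpa only [hj'] using key _ rfl i)
      simpa [projLetters] using this
    | down =>
      obtain rfl : s' = 0 :: s := ha
      obtain ⟨h1, h2⟩ := inc_ok _ hlen _ (key2 _ rfl)
      have := ih hc ⟨0, hl⟩ h1 (fun i => by simpa only [List.length_cons, h2] using key _ rfl i)
      have e : 2 ^ l - s.length = (2 ^ l - (s.length + 1)) + 1 := by omega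
      have t : (projLetters (Option.toList (some (CtrSym.inc (Γ := Γ))) ++ w)) = projLetters w := by
        simp [projLetters]
      rw [t, this]
      simp only [N, R, List.length_cons, e, pow_succ]
      simp
      ring
    | leaf1 g =>
      obtain rfl : s' = s := ha
      obtain ⟨h1, h2⟩ := letter_ok _ hlen _ _ (key2 _ rfl)
      have := ih hc ⟨0, hl⟩ hlen (fun i => by simpa only [h2] using key _ rfl i)
      have t : (projLetters (Option.toList (some (CtrSym.letter g)) ++ w)) = g :: projLetters w := by
        simp [projLetters]
      have e : 2 ^ l - s'.length = 1 := by omega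
      have e' : 2 ^ l - (s'.length + 1) = 0 := by omega
      rw [t, List.length_cons, this]
      simp only [N, e, e']
      simp
      ring
    | leaf2 g =>
      obtain rfl : s' = s := ha
      obtain ⟨h1, h2⟩ := letter_ok _ hlen _ _ (key2 _ rfl)
      have := ih hc ⟨0, hl⟩ hlen (fun i => by simpa only [h2] using key _ rfl i)
      have t : (projLetters (Option.toList (some (CtrSym.letter g)) ++ w)) = g :: projLetters w := by
        simp [projLetters]
      have e' : 2 ^ l - (s'.length + 1) = 0 := by omega
      rw [t, List.length_cons, this]
      simp only [N, e']
      simp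
      ring
    | up0 =>
      obtain rfl : s = 0 :: s' := ha
      have h2 := dec_ok _ _ (key2 _ rfl)
      have := ih hc ⟨0, hl⟩ (by simp at hlen ⊢; omega)
        (fun i => by simpa only [List.length_cons, h2] using key _ rfl i)
      have t : (projLetters (Option.toList (some (CtrSym.dec (Γ := Γ))) ++ w)) = projLetters w := by
        simp [projLetters]
      rw [t, this]
      simp [N, R]
    | up1 =>
      obtain rfl : s = 1 :: s' := ha
      have h2 := dec_ok _ _ (key2 _ rfl)
      have := ih hc ⟨0, hl⟩ (by simp at hlen ⊢; omega)
        (fun i => by simpa only [List.length_cons, h2] using key _ rfl i)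
      have t : (projLetters (Option.toList (some (CtrSym.dec (Γ := Γ))) ++ w)) = projLetters w := by
        simp [projLetters]
      rw [t, this]
      simp [N, R]
    | mid =>
      obtain rfl : s' = 1 :: s := ha
      obtain ⟨h1, h2⟩ := inc_ok _ hlen _ (key2 _ rfl)
      have := ih hc ⟨0, hl⟩ h1 (fun i => by simpa only [List.length_cons, h2] using key _ rfl i)
      have t : (projLetters (Option.toList (some (CtrSym.inc (Γ := Γ))) ++ w)) = projLetters w := by
        simp [projLetters]
      rw [t, this]
      simp [N, R]

/-- Joint reachability of the PDA and all DFAs. -/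
def Good (Γ : Type) (l : ℕ) (c : Fin 3 × List (Fin 2)) (j : ℕ) (c' : Fin 3 × List (Fin 2))
    (j' : ℕ) : Prop :=
  ∃ w : List (CtrSym Γ), (∃ n, (P Γ).Steps c w c' n) ∧
    ∀ (hj : j < l) (hj' : j' < l) (i : Fin l),
      (M Γ i).evalFrom (enc i c.2.length ⟨j, hj⟩) w = enc i c'.2.length ⟨j', hj'⟩

theorem steps_trans {Γ : Type} {c c' c'' : Fin 3 × List (Fin 2)} {w w' : List (CtrSym Γ)}
    {n n' : ℕ} (h : (P Γ).Steps c w c' n) (h' : (P Γ).Steps c' w' c'' n') :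
    ∃ m, (P Γ).Steps c (w ++ w') c'' m := by
  induction h with
  | refl c => exact ⟨_, h'⟩
  | step ht ha hs ih =>
    obtain ⟨m, hm⟩ := ih h'
    rw [List.append_assoc]
    exact ⟨_, .step ht ha hm⟩

theorem Good.trans {Γ : Type} {l : ℕ} {c c' c'' : Fin 3 × List (Fin 2)} {j j' j'' : ℕ}
    (hj' : j' < l) (h : Good Γ l c j c' j') (h' : Good Γ l c' j' c'' j'') :
    Good Γ l c j c'' j'' := by
  obtain ⟨w, ⟨n, hn⟩, hw⟩ := h
  obtain ⟨w', ⟨n', hn'⟩, hw'⟩ := h'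
  refine ⟨w ++ w', steps_trans hn hn', fun hj hj'' i => ?_⟩
  rw [DFA.evalFrom_of_append, hw hj hj' i, hw' hj' hj'' i]

theorem Good.single {Γ : Type} {l : ℕ} {q q' : Fin 3} {s s' : List (Fin 2)} {j j' : ℕ}
    {a : CtrSym Γ} {op : StackOp (Fin 2)} (ht : Tr Γ q (some a) op q') (ha : op.apply s s')
    (hd : ∀ (hj : j < l) (hj' : j' < l) (i : Fin l),
      dstep i (enc i s.length ⟨j, hj⟩) a = enc i s'.length ⟨j', hj'⟩) :
    Good Γ l (q, s) j (q', s') j' := by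
  refine ⟨[a], ⟨_, .step (a := some a) (w := []) ht ha (.refl _)⟩, fun hj hj' i => ?_⟩
  exact hd hj hj' i

theorem good_bits {Γ : Type} {l : ℕ} (c : Fin 3 × List (Fin 2)) (k : ℕ) (hk : k < l) :
    Good Γ l c 0 c k := by
  induction k with
  | zero => exact ⟨[], ⟨_, .refl c⟩, fun _ _ _ => rfl⟩
  | succ k ih =>
    refine (ih (by omega)).trans (by omega) (Good.single (.bit c.1 true) rfl ?_)
    intro hj hj' i
    simp [dstep, enc, hk]

theorem good_inc {Γ : Type} {l : ℕ} {q q' : Fin 3} {s : List (Fin 2)} {x : Fin 2}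
    (ht : Tr Γ q (some .inc) (.push x) q') (hs : s.length + 1 < 2 ^ l) :
    Good Γ l (q, s) 0 (q', x :: s) 0 := by
  obtain ⟨k, h1, ⟨h2, h2'⟩, h3⟩ := carry s.length
  have hk := lt_of_testBit h2' hs
  refine (good_bits _ k hk).trans hk (Good.single ht rfl ?_)
  intro _ _ i
  rw [List.length_cons]
  rcases lt_trichotomy i.val k with hlt | heq | hgt
  · simp [dstep, enc, Fin.lt_def, hlt, h1 _ hlt]
  · subst heq
    simp [dstep, enc, h2, h2']
  · simp [dstep, enc, Fin.lt_def, Fin.ext_iff, hgt.not_gt, hgt.ne', h3 _ hgt]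

theorem good_dec {Γ : Type} {l : ℕ} {q q' : Fin 3} {s : List (Fin 2)} {x : Fin 2}
    (ht : Tr Γ q (some .dec) (.pop x) q') (hs : s.length + 1 < 2 ^ l) :
    Good Γ l (q, x :: s) 0 (q', s) 0 := by
  obtain ⟨k, h1, ⟨h2, h2'⟩, h3⟩ := carry s.length
  have hk := lt_of_testBit h2' hs
  refine (good_bits _ k hk).trans hk (Good.single ht rfl ?_)
  intro _ _ i
  rw [List.length_cons]
  rcases lt_trichotomy i.val k with hlt | heq | hgt
  · simp [dstep, enc, Fin.lt_def, hlt, h1 _ hlt]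
  · subst heq
    simp [dstep, enc, h2, h2']
  · simp [dstep, enc, Fin.lt_def, Fin.ext_iff, hgt.not_gt, hgt.ne', h3 _ hgt]

theorem good_letter {Γ : Type} {l : ℕ} {q q' : Fin 3} {s : List (Fin 2)} {g : Γ}
    (ht : Tr Γ q (some (.letter g)) .nop q') (hs : s.length + 1 = 2 ^ l) :
    Good Γ l (q, s) 0 (q', s) 0 := by
  refine Good.single ht rfl ?_
  intro _ _ i
  have : s.length = 2 ^ l - 1 := by omega
  simp [dstep, enc, this, Nat.testBit_two_pow_sub_one]

theorem good_tree {Γ : Type} (g : Γ) {l : ℕ} (hl : 0 < l) (d : ℕ) :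
    ∀ s : List (Fin 2), s.length + 1 + d = 2 ^ l → Good Γ l (0, s) 0 (1, s) 0 := by
  induction d with
  | zero =>
    intro s hs
    exact (good_letter (.leaf1 g) hs).trans hl (good_letter (.leaf2 g) hs)
  | succ d ih =>
    intro s hs
    have h : s.length + 1 < 2 ^ l := by omega
    exact (good_inc .down h).trans hl <| (ih (0 :: s) (by simp; omega)).trans hl <|
      (good_dec .up0 h).trans hl <| (good_inc .mid h).trans hl <|
      (ih (1 :: s) (by simp; omega)).trans hl <| good_dec .up1 h

end DoubleExp

/-- there is a constant `c` such that for every `ℓ ≥ 1` there are a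
PDA with 3 states and 2 stack symbols and `ℓ` DFAs with at most `c·ℓ` states each,
such that every word in the intersection of their languages projects to a word over
`Γ₂` of length exactly `2^(2^ℓ)`, and such a word exists. -/
theorem exists_pda_dfas_double_exponential :
    ∃ c : ℕ, ∀ ℓ : ℕ, 1 ≤ ℓ → ∀ Γ : Type, Nonempty Γ →
      ∃ (A : PDA (Fin 3) (Fin 2) (CtrSym Γ)) (Bs : Fin ℓ → DFA (CtrSym Γ) (Fin (c * ℓ))),
        (∀ w : List (CtrSym Γ), w ∈ A.language → (∀ i, w ∈ (Bs i).accepts) →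
          (projLetters w).length = 2 ^ (2 ^ ℓ)) ∧
        ∃ w : List (CtrSym Γ), w ∈ A.language ∧ ∀ i, w ∈ (Bs i).accepts := by
  refine ⟨3, fun ℓ hℓ Γ ⟨g⟩ => ⟨DoubleExp.P Γ,
    fun i => DFA.reindex finProdFinEquiv (DoubleExp.M Γ i), ?_, ?_⟩⟩
  · rintro w ⟨f, hf, n, hs⟩ hB
    obtain rfl : f = 1 := hf
    have := DoubleExp.sound (l := ℓ) hℓ hs rfl ⟨0, hℓ⟩ (by simp) (fun i => by
      have h := hB i
      rw [DFA.accepts_reindex, DFA.mem_accepts] at h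
      simpa [DoubleExp.enc, DoubleExp.M, DFA.eval] using h)
    rw [this]
    simp [DoubleExp.N, DoubleExp.R, DoubleExp.P]
  · have pos : 0 < 2 ^ ℓ := by positivity
    obtain ⟨w, hs, hw⟩ := DoubleExp.good_tree g hℓ (2 ^ ℓ - 1) [] (by simp; omega)
    refine ⟨w, ⟨1, rfl, hs⟩, fun i => ?_⟩
    rw [DFA.accepts_reindex, DFA.mem_accepts]
    have h := hw hℓ hℓ i
    have h2 : (DoubleExp.M Γ i).eval w = DoubleExp.enc i 0 ⟨0, hℓ⟩ := by
      simpa [DoubleExp.enc, DoubleExp.M, DFA.eval] using h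
    rw [h2]
    simp [DoubleExp.M, DoubleExp.enc]
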